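/- Let X be a set and let S : [0,∞) → (X → X) satisfy the semigroup properties S(0) = id and S(t+s) = S(t) ∘ S(s) for all t, s ≥ 0. Let E : X → [0,∞), let Q : [0,∞) → [0,∞) be nondecreasing, and let ω : [0,∞) → (0,∞) be nonincreasing. Assume that for every x ∈ X and every t ≥ 0 one has E(S(t)x) ≤ Q(E(x)) · exp(−ω(E(x)) t). Then there exist a constant ω₀ > 0 and a nondecreasing function Q₀ : [0,∞) → [0,∞) such that E(S(t)x) ≤ Q₀(E(x)) · exp(−ω₀ t) for every x ∈ X and every t ≥ 0. -/

import Mathlib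

/-- The standard trick of semigroup theory: an exponential decay estimate for the energy
whose rate `ω` deteriorates (nonincreasingly) with the size of the initial energy can be
upgraded to an exponential decay estimate with a universal rate `ω₀`. -/
theorem semigroup_decay_upgrade
    {X : Type*} (S : ℝ → X → X)
    (hS0 : S 0 = id)
    (hSadd : ∀ t s : ℝ, 0 ≤ t → 0 ≤ s → S (t + s) = S t ∘ S s)
    (E : X → ℝ) (hE : ∀ x, 0 ≤ E x)
    (Q : ℝ → ℝ) (hQmono : MonotoneOn Q (Set.Ici 0)) (hQpos : ∀ x, 0 ≤ x → 0 ≤ Q x)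
    (ω : ℝ → ℝ) (hωanti : AntitoneOn ω (Set.Ici 0)) (hωpos : ∀ x, 0 ≤ x → 0 < ω x)
    (hdecay : ∀ (x : X) (t : ℝ), 0 ≤ t →
        E (S t x) ≤ Q (E x) * Real.exp (-(ω (E x)) * t)) :
    ∃ (ω₀ : ℝ) (Q₀ : ℝ → ℝ), 0 < ω₀ ∧ MonotoneOn Q₀ (Set.Ici 0) ∧
      (∀ x, 0 ≤ x → 0 ≤ Q₀ x) ∧
      ∀ (x : X) (t : ℝ), 0 ≤ t → E (S t x) ≤ Q₀ (E x) * Real.exp (-ω₀ * t) := by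
  have h1 : (0:ℝ) ≤ 1 := zero_le_one
  have hT0 : ∀ e, 0 ≤ e → 0 ≤ Q e / ω e := fun e he => div_nonneg (hQpos e he) (hωpos e he).le
  refine ⟨ω 1, fun e => (Q e + Q 1) * Real.exp (ω 1 * (Q e / ω e)), hωpos 1 h1, ?_, ?_, ?_⟩
  · intro a ha b hb hab
    have ha' : 0 ≤ a := ha
    have hb' : 0 ≤ b := hb
    have hq := hQmono ha hb hab
    have hw := hωanti ha hb hab
    have hT : Q a / ω a ≤ Q b / ω b := div_le_div₀ (hQpos b hb') hq (hωpos b hb') hw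
    have h2 := hQpos b hb'
    have h3 := hQpos 1 h1
    have h4 := (hωpos 1 h1).le
    refine mul_le_mul (by linarith) (Real.exp_le_exp.2 (mul_le_mul_of_nonneg_left hT h4))
      (Real.exp_pos _).le (by linarith)
  · intro e he
    exact mul_nonneg (add_nonneg (hQpos e he) (hQpos 1 h1)) (Real.exp_pos _).le
  · intro x t ht
    have hq := hQpos _ (hE x)
    have hw := hωpos _ (hE x)
    have hq1 := hQpos 1 h1
    have hw1 := hωpos 1 h1
    have hT := hT0 _ (hE x)
    have hTw : ω (E x) * (Q (E x) / ω (E x)) = Q (E x) := mul_div_cancel₀ _ hw.ne'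
    have hyd := hdecay x _ hT
    rw [neg_mul, hTw] at hyd
    show _ ≤ (Q (E x) + Q 1) * Real.exp (ω 1 * (Q (E x) / ω (E x))) * Real.exp (-ω 1 * t)
    rw [mul_assoc, ← Real.exp_add]
    generalize Q (E x) / ω (E x) = T at *
    rcases le_total t T with h | h
    · refine (hdecay x t ht).trans (mul_le_mul (by linarith) (Real.exp_le_exp.2 ?_)
        (Real.exp_pos _).le (by linarith))
      nlinarith [mul_nonneg hw.le ht, mul_nonneg hw1.le (sub_nonneg.2 h)]
    · have hy : E (S T x) ≤ 1 := by
        refine hyd.trans ?_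
        rw [Real.exp_neg, ← div_eq_mul_inv, div_le_one (Real.exp_pos _)]
        linarith [Real.add_one_le_exp (Q (E x))]
      have hS : S t x = S (t - T) (S T x) := by
        have := congrFun (hSadd (t - T) T (sub_nonneg.2 h) hT) x
        simpa using this
      rw [hS]
      have hQy := hQmono (Set.mem_Ici.2 (hE (S T x))) (Set.mem_Ici.2 h1) hy
      have hwy := hωanti (Set.mem_Ici.2 (hE (S T x))) (Set.mem_Ici.2 h1) hy
      refine (hdecay (S T x) (t - T) (sub_nonneg.2 h)).trans (mul_le_mul (by linarith)
        (Real.exp_le_exp.2 ?_) (Real.exp_pos _).le (by linarith))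
      nlinarith [mul_le_mul_of_nonneg_right hwy (sub_nonneg.2 h)]
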